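/- arXiv:2412.14267 — 2 statements merged into one kernel-verified Lean document; each statement's English description precedes it below -/
import Mathlib

section
/- As x → ∞, uniformly on D, Δ_Σ g(x,y) = (s₀·σ̄²/(c₀·a∞))·x^{−β} + o(x^{−(1+β)/2}). -/
open Filter Topology

/-- `F(x,y) = o(x^a)` as `x → ∞`, uniformly over `{y : ‖y‖ ≤ b x}`. -/
def UnifLittleO {d : ℕ} (b : ℝ → ℝ) (F : ℝ → EuclideanSpace ℝ (Fin d) → ℝ) (a : ℝ) :
    Prop :=
  ∀ ε : ℝ, 0 < ε → ∃ X : ℝ, ∀ x ≥ X, ∀ y : EuclideanSpace ℝ (Fin d), ‖y‖ ≤ b x →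
    |F x y| ≤ ε * x ^ a

/-- The Hessian matrix `(∂ᵢ∂ⱼ g)_{i,j=0,…,d}` of `g(x,y) = x + (s₀/(2c₀))|y|²/b(x)`
(`∂₀ = ∂ₓ`, `∂ᵢ = ∂_{yᵢ}` for `i ≥ 1`):
`∂ₓ∂ₓg = (s₀/(2c₀))|y|²(2b′(x)²/b(x)³ - b″(x)/b(x)²)`,
`∂ₓ∂_{yᵢ}g = -(s₀/c₀)yᵢb′(x)/b(x)²`, `∂_{yᵢ}∂_{yⱼ}g = (s₀/c₀)δᵢⱼ/b(x)`. -/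
noncomputable def hessg {d : ℕ} (b b' b'' : ℝ → ℝ) (s₀ c₀ : ℝ)
    (x : ℝ) (y : EuclideanSpace ℝ (Fin d)) : Fin (d + 1) → Fin (d + 1) → ℝ :=
  Fin.cons
    (Fin.cons
      (s₀ / (2 * c₀) * ‖y‖ ^ 2 * (2 * (b' x) ^ 2 / (b x) ^ 3 - b'' x / (b x) ^ 2))
      (fun j => -(s₀ / c₀) * y j * b' x / (b x) ^ 2))
    (fun i => Fin.cons (-(s₀ / c₀) * y i * b' x / (b x) ^ 2)
      (fun j => if i = j then s₀ / c₀ / b x else 0))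

/-!
Every entry of the Hessian of `g` outside the tangential block `(s₀/c₀)/b(x) · I` is negligible on
`D`: since `|y| ≤ b(x)`, the entry `∂ₓ∂ₓg` is at most of the order of `b′²/b + |b″| = O(x^{β-2})`
and `∂ₓ∂_{yᵢ}g` of the order of `b′/b = O(x^{-1})`, and for `β < 1` both exponents lie below
`-(1+β)/2`. What is left is `(s₀/c₀)·b(x)⁻¹·∑ Σᵢᵢ`. Here `b⁻¹ - (a∞x^β)⁻¹` is of the order of
`f/x^{2β} = o(x^{(3β-1)/2-2β})`, and the error `o(x^{-(1-β)/2})` of the trace is multiplied by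
`b⁻¹ = O(x^{-β})`; both errors are `o(x^{-(1+β)/2})`.
-/

open Asymptotics

section PowerAsymptotics

variable {a p q r : ℝ} {b f f' g g' : ℝ → ℝ}

lemma isLittleO_rpow_of_tendsto_div (h : Tendsto (fun x => f x / x ^ p) atTop (𝓝 0)) :
    f =o[atTop] fun x => x ^ p := by
  refine isLittleO_of_tendsto' ?_ h
  filter_upwards [eventually_gt_atTop 0] with x hx hxp
  exact absurd hxp (Real.rpow_pos_of_pos hx p).ne'

lemma isLittleO_rpow_rpow_atTop (h : p < q) :
    (fun x : ℝ => x ^ p) =o[atTop] fun x => x ^ q := by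
  have hlim : Tendsto (fun x : ℝ => x ^ (-(q - p))) atTop (𝓝 0) :=
    tendsto_rpow_neg_atTop (sub_pos.2 h)
  refine isLittleO_rpow_of_tendsto_div (hlim.congr' ?_)
  filter_upwards [eventually_gt_atTop 0] with x hx
  rw [← Real.rpow_sub hx, neg_sub]

lemma isBigO_rpow_rpow_atTop (h : p ≤ q) :
    (fun x : ℝ => x ^ p) =O[atTop] fun x => x ^ q := by
  rcases h.eq_or_lt with rfl | h
  · exact isBigO_refl _ _
  · exact (isLittleO_rpow_rpow_atTop h).isBigO

lemma rpow_mul_rpow_eventuallyEq_atTop (h : p + q = r) :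
    (fun x : ℝ => x ^ p * x ^ q) =ᶠ[atTop] fun x => x ^ r := by
  filter_upwards [eventually_gt_atTop 0] with x hx
  rw [← Real.rpow_add hx, h]

lemma isBigO_rpow_of_tendsto_div (h : Tendsto (fun x => f x / x ^ p) atTop (𝓝 0)) (hpq : p ≤ q) :
    f =O[atTop] fun x => x ^ q :=
  (isLittleO_rpow_of_tendsto_div h).isBigO.trans (isBigO_rpow_rpow_atTop hpq)

lemma isBigO_rpow_of_eq_mul_rpow_add (hg : ∀ x, 0 < x → g x = a * x ^ p + f x)
    (hf : f =O[atTop] fun x => x ^ p) : g =O[atTop] fun x => x ^ p := by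
  have hsum : (fun x => a * x ^ p + f x) =O[atTop] fun x => x ^ p :=
    ((isBigO_refl _ _).const_mul_left a).add hf
  refine hsum.congr' ?_ .rfl
  filter_upwards [eventually_gt_atTop 0] with x hx using (hg x hx).symm

lemma deriv_eq_of_eq_mul_rpow_add (hg : ∀ x, 0 < x → g x = a * x ^ p + f x)
    (hg' : ∀ x, 0 < x → HasDerivAt g (g' x) x) (hf' : ∀ x, 0 < x → HasDerivAt f (f' x) x)
    {x : ℝ} (hx : 0 < x) : g' x = a * p * x ^ (p - 1) + f' x := by
  have hsum : HasDerivAt (fun z => a * z ^ p + f z) (a * (p * x ^ (p - 1)) + f' x) x :=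
    ((Real.hasDerivAt_rpow_const (.inl hx.ne')).const_mul a).add (hf' x hx)
  rw [mul_assoc]
  refine (hg' x hx).unique (hsum.congr_of_eventuallyEq ?_)
  filter_upwards [lt_mem_nhds hx] with z hz using hg z hz

lemma isBigO_inv_rpow (h : b =Θ[atTop] fun x => x ^ p) :
    (fun x => (b x)⁻¹) =O[atTop] fun x => x ^ (-p) := by
  refine h.inv.isBigO.trans_eventuallyEq ?_
  filter_upwards [eventually_ge_atTop 0] with x hx using (Real.rpow_neg hx p).symm

lemma isEquivalent_mul_rpow_of_isLittleO_sub (ha : a ≠ 0) (hpq : q < p)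
    (h : (fun x => b x - a * x ^ p) =o[atTop] fun x => x ^ q) :
    b ~[atTop] fun x => a * x ^ p :=
  (h.trans (isLittleO_rpow_rpow_atTop hpq)).const_mul_right ha

lemma isTheta_rpow_of_isLittleO_sub (ha : a ≠ 0) (hpq : q < p)
    (h : (fun x => b x - a * x ^ p) =o[atTop] fun x => x ^ q) :
    b =Θ[atTop] fun x => x ^ p :=
  (isEquivalent_mul_rpow_of_isLittleO_sub ha hpq h).isTheta.trans
    ((isTheta_refl _ _).const_mul_left ha)

lemma isLittleO_inv_sub_inv_rpow (ha : a ≠ 0) (hpq : q < p)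
    (h : (fun x => b x - a * x ^ p) =o[atTop] fun x => x ^ q) :
    (fun x => (b x)⁻¹ - (a * x ^ p)⁻¹) =o[atTop] fun x => x ^ (q - 2 * p) := by
  have hb := isTheta_rpow_of_isLittleO_sub ha hpq h
  have hmodel : (fun x : ℝ => a * x ^ p) =Θ[atTop] fun x => x ^ p :=
    (isTheta_refl _ _).const_mul_left ha
  have hprod := h.mul_isBigO ((isBigO_inv_rpow hb).mul_atTop_rpow_of_isBigO_rpow _ _ _
    (isBigO_inv_rpow hmodel) le_rfl)
  refine (hprod.neg_left.congr' ?_ .rfl).trans_eventuallyEq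
    (rpow_mul_rpow_eventuallyEq_atTop (by ring))
  have hb_ne : ∀ᶠ x in atTop, b x ≠ 0 := by
    filter_upwards [hb.eq_zero_iff, eventually_gt_atTop 0] with x hbx hx
    exact hbx.not.2 (Real.rpow_pos_of_pos hx p).ne'
  filter_upwards [hb_ne, eventually_gt_atTop 0] with x hbx hx
  have hxp := (Real.rpow_pos_of_pos hx p).ne'
  simp only [Pi.mul_apply]
  field_simp
  ring

end PowerAsymptotics

section DomainAtTop

variable {E : Type*} [Norm E] {b : ℝ → ℝ}

/-- The filter of `(x, y)` with `x → ∞` inside the domain `D = {(x, y) | ‖y‖ ≤ b x}`. Asymptotic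
relations along it are the ones which hold as `x → ∞`, uniformly on `D`. -/
def domainAtTop (b : ℝ → ℝ) : Filter (ℝ × E) :=
  comap Prod.fst atTop ⊓ 𝓟 {z | ‖z.2‖ ≤ b z.1}

lemma eventually_domainAtTop {P : ℝ × E → Prop} :
    (∀ᶠ z in domainAtTop b, P z) ↔ ∃ X, ∀ x ≥ X, ∀ y : E, ‖y‖ ≤ b x → P (x, y) := by
  simp only [((atTop_basis.comap _).inf_principal _).eventually_iff, domainAtTop, Set.mem_inter_iff,
    Set.mem_preimage, Set.mem_Ici, Set.mem_ofPred_eq, Prod.forall, and_imp, true_and, ge_iff_le]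
  exact exists_congr fun X => forall_congr' fun x => forall_comm

lemma tendsto_fst_domainAtTop : Tendsto Prod.fst (domainAtTop (E := E) b) atTop :=
  tendsto_comap.mono_left inf_le_left

lemma eventually_norm_snd_le_domainAtTop : ∀ᶠ z : ℝ × E in domainAtTop b, ‖z.2‖ ≤ b z.1 :=
  mem_inf_of_right (mem_principal_self _)

lemma eventually_fst_pos_domainAtTop : ∀ᶠ z : ℝ × E in domainAtTop b, 0 < z.1 :=
  tendsto_fst_domainAtTop.eventually_gt_atTop 0

lemma isBigO_one_domainAtTop {F : ℝ → E → ℝ} {K : ℝ} (hF : ∀ x y, ‖y‖ ≤ b x → |F x y| ≤ K) :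
    (fun z : ℝ × E => F z.1 z.2) =O[domainAtTop b] fun _ => (1 : ℝ) := by
  refine .of_bound K (eventually_norm_snd_le_domainAtTop.mono fun z hz => ?_)
  simpa using hF z.1 z.2 hz

lemma isLittleO_rpow_neg_domainAtTop {F : ℝ → E → ℝ} {p : ℝ}
    (hF : ∀ ε : ℝ, 0 < ε → ∃ X : ℝ, ∀ x ≥ X, ∀ y : E, ‖y‖ ≤ b x → x ^ p * |F x y| ≤ ε) :
    (fun z : ℝ × E => F z.1 z.2) =o[domainAtTop b] fun z => z.1 ^ (-p) := by
  refine isLittleO_iff.2 fun ε hε => ?_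
  have hFε : ∀ᶠ z : ℝ × E in domainAtTop b, z.1 ^ p * |F z.1 z.2| ≤ ε :=
    eventually_domainAtTop.2 (hF ε hε)
  filter_upwards [hFε, eventually_fst_pos_domainAtTop] with z hFz hz
  have hzp := Real.rpow_pos_of_pos hz p
  rwa [Real.rpow_neg hz.le, norm_inv, Real.norm_eq_abs, Real.norm_of_nonneg hzp.le,
    ← div_eq_mul_inv, le_div_iff₀' hzp]

lemma isBigO_div_one_domainAtTop {φ : E → ℝ} (hφ : ∀ y, |φ y| ≤ ‖y‖) :
    (fun z : ℝ × E => φ z.2 / b z.1) =O[domainAtTop b] fun _ => (1 : ℝ) := by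
  refine .of_bound 1 (eventually_norm_snd_le_domainAtTop.mono fun z hz => ?_)
  have hφb : |φ z.2| ≤ |b z.1| := (hφ z.2).trans (hz.trans (le_abs_self _))
  simpa only [Real.norm_eq_abs, abs_div, abs_one, mul_one] using
    div_le_one_of_le₀ hφb (abs_nonneg _)

lemma isLittleO_inv_mul_sub_mul_inv_rpow {a p q σ : ℝ} {T : ℝ × E → ℝ}
    (ha : a ≠ 0) (hpq : q < p)
    (hb : (fun x => b x - a * x ^ p) =o[atTop] fun x => x ^ q)
    (hT : (fun z => T z - σ) =o[domainAtTop b] fun z => z.1 ^ (q - p)) :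
    (fun z => (b z.1)⁻¹ * T z - σ * (a * z.1 ^ p)⁻¹) =o[domainAtTop b]
      fun z => z.1 ^ (q - 2 * p) := by
  have hinv := (isBigO_inv_rpow (isTheta_rpow_of_isLittleO_sub ha hpq hb)).comp_tendsto
    (tendsto_fst_domainAtTop (E := E) (b := b))
  have htrace : (fun z => (b z.1)⁻¹ * (T z - σ)) =o[domainAtTop b] fun z => z.1 ^ (q - 2 * p) :=
    (hinv.mul_isLittleO hT).trans_eventuallyEq <|
      (rpow_mul_rpow_eventuallyEq_atTop (by ring)).comp_tendsto tendsto_fst_domainAtTop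
  have hmodel := ((isLittleO_inv_sub_inv_rpow ha hpq hb).comp_tendsto
    (tendsto_fst_domainAtTop (E := E) (b := b))).const_mul_left σ
  refine (htrace.add hmodel).congr_left fun z => ?_
  simp only [Function.comp_apply]
  ring

end DomainAtTop

lemma unifLittleO_of_isLittleO {d : ℕ} {b : ℝ → ℝ} {F : ℝ → EuclideanSpace ℝ (Fin d) → ℝ} {p : ℝ}
    (h : (fun z : ℝ × EuclideanSpace ℝ (Fin d) => F z.1 z.2) =o[domainAtTop b] fun z => z.1 ^ p) :
    UnifLittleO b F p := by
  intro ε hε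
  suffices ∀ᶠ z in domainAtTop b, |F z.1 z.2| ≤ ε * z.1 ^ p from eventually_domainAtTop.1 this
  filter_upwards [isLittleO_iff.1 h hε, eventually_fst_pos_domainAtTop] with z hFz hz
  rwa [Real.norm_of_nonneg (Real.rpow_nonneg hz.le p)] at hFz

section Hessian

variable {d : ℕ} {a β s₀ c₀ : ℝ} {b b' b'' : ℝ → ℝ}

lemma sum_mul_hessg (b b' b'' : ℝ → ℝ) (s₀ c₀ x : ℝ) (y : EuclideanSpace ℝ (Fin d))
    (S : Matrix (Fin (d + 1)) (Fin (d + 1)) ℝ) :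
    ∑ i, ∑ j, S i j * hessg b b' b'' s₀ c₀ x y i j =
      S 0 0 * hessg b b' b'' s₀ c₀ x y 0 0
        + ∑ j : Fin d, (S 0 j.succ + S j.succ 0) * hessg b b' b'' s₀ c₀ x y 0 j.succ
        + s₀ / c₀ * ((b x)⁻¹ * ∑ i : Fin d, S i.succ i.succ) := by
  simp only [Fin.sum_univ_succ, hessg, Fin.cons_zero, Fin.cons_succ, mul_ite, mul_zero,
    Finset.sum_ite_eq, Finset.mem_univ, if_true, Finset.sum_add_distrib, add_mul, ← Finset.sum_mul]
  ring

lemma isBigO_hessg_zero_zero :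
    (fun z : ℝ × EuclideanSpace ℝ (Fin d) => hessg b b' b'' s₀ c₀ z.1 z.2 0 0) =O[domainAtTop b]
      fun z => 2 * (b' z.1 * (b' z.1 * (b z.1)⁻¹)) - b'' z.1 := by
  have hratio : (fun z : ℝ × EuclideanSpace ℝ (Fin d) => ‖z.2‖ / b z.1) =O[domainAtTop b]
      fun _ => (1 : ℝ) := isBigO_div_one_domainAtTop fun y => (abs_norm y).le
  refine (((hratio.pow 2).mul (isBigO_refl _ _)).const_mul_left (s₀ / (2 * c₀))).congr
    (fun z => ?_) fun z => by rw [one_pow, one_mul]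
  simp only [hessg, Fin.cons_zero]
  ring

lemma isBigO_hessg_zero_succ (j : Fin d) :
    (fun z : ℝ × EuclideanSpace ℝ (Fin d) => hessg b b' b'' s₀ c₀ z.1 z.2 0 j.succ)
      =O[domainAtTop b] fun z => b' z.1 * (b z.1)⁻¹ := by
  have hratio : (fun z : ℝ × EuclideanSpace ℝ (Fin d) => z.2 j / b z.1) =O[domainAtTop b]
      fun _ => (1 : ℝ) :=
    isBigO_div_one_domainAtTop (φ := fun y : EuclideanSpace ℝ (Fin d) => y j)
      fun y => PiLp.norm_apply_le y j
  refine ((hratio.mul (isBigO_refl _ _)).const_mul_left (-(s₀ / c₀))).congr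
    (fun z => ?_) fun z => one_mul _
  simp only [hessg, Fin.cons_zero, Fin.cons_succ]
  ring

lemma isLittleO_hessg_zero_zero (hβ : β < 1) (hb : b =Θ[atTop] fun x => x ^ β)
    (hb' : b' =O[atTop] fun x => x ^ (β - 1)) (hb'' : b'' =O[atTop] fun x => x ^ (β - 2)) :
    (fun z : ℝ × EuclideanSpace ℝ (Fin d) => hessg b b' b'' s₀ c₀ z.1 z.2 0 0)
      =o[domainAtTop b] fun z => z.1 ^ (-(1 + β) / 2) := by
  have hb'b : (fun x => b' x * (b' x * (b x)⁻¹)) =O[atTop] fun x => x ^ (β - 2) :=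
    hb'.mul_atTop_rpow_of_isBigO_rpow _ (-1) _
      (hb'.mul_atTop_rpow_of_isBigO_rpow _ _ _ (isBigO_inv_rpow hb) (by linarith)) (by linarith)
  exact isBigO_hessg_zero_zero.trans_isLittleO <|
    (((hb'b.const_mul_left 2).sub hb'').trans_isLittleO
      (isLittleO_rpow_rpow_atTop (by linarith))).comp_tendsto tendsto_fst_domainAtTop

lemma isLittleO_hessg_zero_succ (hβ : β < 1) (hb : b =Θ[atTop] fun x => x ^ β)
    (hb' : b' =O[atTop] fun x => x ^ (β - 1)) (j : Fin d) :
    (fun z : ℝ × EuclideanSpace ℝ (Fin d) => hessg b b' b'' s₀ c₀ z.1 z.2 0 j.succ)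
      =o[domainAtTop b] fun z => z.1 ^ (-(1 + β) / 2) := by
  have hb'b : (fun x => b' x * (b x)⁻¹) =O[atTop] fun x => x ^ (-1 : ℝ) :=
    hb'.mul_atTop_rpow_of_isBigO_rpow _ _ _ (isBigO_inv_rpow hb) (by linarith)
  exact (isBigO_hessg_zero_succ j).trans_isLittleO <|
    (hb'b.trans_isLittleO (isLittleO_rpow_rpow_atTop (by linarith))).comp_tendsto
      tendsto_fst_domainAtTop

lemma isLittleO_sum_mul_hessg_sub {σ : ℝ}
    {S : ℝ × EuclideanSpace ℝ (Fin d) → Matrix (Fin (d + 1)) (Fin (d + 1)) ℝ}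
    (hβ : β < 1) (ha : a ≠ 0)
    (hb : (fun x => b x - a * x ^ β) =o[atTop] fun x => x ^ ((3 * β - 1) / 2))
    (hb' : b' =O[atTop] fun x => x ^ (β - 1)) (hb'' : b'' =O[atTop] fun x => x ^ (β - 2))
    (hrow : ∀ j, (fun z => S z 0 j) =O[domainAtTop b] fun _ => (1 : ℝ))
    (hcol : ∀ i, (fun z => S z i 0) =O[domainAtTop b] fun _ => (1 : ℝ))
    (htrace : (fun z => ∑ i : Fin d, S z i.succ i.succ - σ) =o[domainAtTop b]
      fun z => z.1 ^ (-((1 - β) / 2))) :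
    (fun z => ∑ i, ∑ j, S z i j * hessg b b' b'' s₀ c₀ z.1 z.2 i j
        - s₀ * σ / (c₀ * a) * z.1 ^ (-β)) =o[domainAtTop b]
      fun z => z.1 ^ (-(1 + β) / 2) := by
  have hbΘ := isTheta_rpow_of_isLittleO_sub ha (by linarith) hb
  have hxx : (fun z => S z 0 0 * hessg b b' b'' s₀ c₀ z.1 z.2 0 0) =o[domainAtTop b]
      fun z => z.1 ^ (-(1 + β) / 2) :=
    ((hrow 0).mul_isLittleO (isLittleO_hessg_zero_zero hβ hbΘ hb' hb'')).congr_right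
      fun z => one_mul _
  have hxy : (fun z => ∑ j : Fin d, (S z 0 j.succ + S z j.succ 0) *
      hessg b b' b'' s₀ c₀ z.1 z.2 0 j.succ) =o[domainAtTop b] fun z => z.1 ^ (-(1 + β) / 2) :=
    .fun_sum fun j _ => (((hrow j.succ).add (hcol j.succ)).mul_isLittleO
      (isLittleO_hessg_zero_succ hβ hbΘ hb' j)).congr_right fun z => one_mul _
  have hyy : (fun z => (b z.1)⁻¹ * ∑ i : Fin d, S z i.succ i.succ - σ * (a * z.1 ^ β)⁻¹)
      =o[domainAtTop b] fun z => z.1 ^ (-(1 + β) / 2) := by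
    rw [show -((1 - β) / 2) = (3 * β - 1) / 2 - β by ring] at htrace
    rw [show -(1 + β) / 2 = (3 * β - 1) / 2 - 2 * β by ring]
    exact isLittleO_inv_mul_sub_mul_inv_rpow ha (by linarith) hb htrace
  refine ((hxx.add hxy).add (hyy.const_mul_left (s₀ / c₀))).congr' ?_ .rfl
  filter_upwards [eventually_fst_pos_domainAtTop] with z hz
  rw [sum_mul_hessg, Real.rpow_neg hz.le]
  ring

end Hessian

theorem stmt_5_general {d : ℕ} {β ainf s₀ c₀ σ : ℝ} (hβ : β < 1) (ha : 0 < ainf) (_hc₀ : c₀ ≠ 0)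
    {b b' b'' f f' f'' : ℝ → ℝ}
    (hb' : ∀ x, 0 < x → HasDerivAt b (b' x) x) (hb'' : ∀ x, 0 < x → HasDerivAt b' (b'' x) x)
    (hbf : ∀ x, 0 < x → b x = ainf * x ^ β + f x)
    (hf' : ∀ x, 0 < x → HasDerivAt f (f' x) x) (hf'' : ∀ x, 0 < x → HasDerivAt f' (f'' x) x)
    (hfo : f =o[atTop] fun x => x ^ ((3 * β - 1) / 2))
    (hf'O : f' =O[atTop] fun x => x ^ (β - 1)) (hf''O : f'' =O[atTop] fun x => x ^ (β - 2))
    {S : ℝ → EuclideanSpace ℝ (Fin d) → Matrix (Fin (d + 1)) (Fin (d + 1)) ℝ}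
    (hrow : ∀ j, (fun z => S z.1 z.2 0 j) =O[domainAtTop b] fun _ => (1 : ℝ))
    (hcol : ∀ i, (fun z => S z.1 z.2 i 0) =O[domainAtTop b] fun _ => (1 : ℝ))
    (htrace : (fun z => ∑ i : Fin d, S z.1 z.2 i.succ i.succ - σ) =o[domainAtTop b]
      fun z => z.1 ^ (-((1 - β) / 2))) :
    UnifLittleO b
      (fun x y => ∑ i, ∑ j, S x y i j * hessg b b' b'' s₀ c₀ x y i j
        - s₀ * σ / (c₀ * ainf) * x ^ (-β))
      (-(1 + β) / 2) := by
  have hb_sub : (fun x => b x - ainf * x ^ β) =o[atTop] fun x => x ^ ((3 * β - 1) / 2) :=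
    hfo.congr' (by filter_upwards [eventually_gt_atTop 0] with x hx; rw [hbf x hx]; ring) .rfl
  have hb'_eq (x : ℝ) (hx : 0 < x) : b' x = ainf * β * x ^ (β - 1) + f' x :=
    deriv_eq_of_eq_mul_rpow_add hbf hb' hf' hx
  have hb''_eq (x : ℝ) (hx : 0 < x) : b'' x = ainf * β * (β - 1) * x ^ (β - 2) + f'' x := by
    simpa only [sub_sub, one_add_one_eq_two] using
      deriv_eq_of_eq_mul_rpow_add hb'_eq hb'' hf'' hx
  exact unifLittleO_of_isLittleO <| isLittleO_sum_mul_hessg_sub hβ ha.ne' hb_sub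
    (isBigO_rpow_of_eq_mul_rpow_add hb'_eq hf'O) (isBigO_rpow_of_eq_mul_rpow_add hb''_eq hf''O)
    hrow hcol htrace

/-- Under (D₂⁺) and (C⁺), uniformly on `D` as `x → ∞`,
`Δ_Σ g(x,y) := ∑_{i,j=0}^d Σᵢⱼ(x,y)·∂ᵢ∂ⱼg(x,y)
  = (s₀σ̄²/(c₀a∞))x^{-β} + o(x^{-(1+β)/2})`, where `σ̄² = ∑_{i=1}^d Σ^∞ᵢᵢ`. -/
theorem stmt_5 (d : ℕ) (hd : 1 ≤ d) (β ainf s₀ c₀ : ℝ)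
    (hβ : -1 < β) (hβ1 : β < 1) (ha : 0 < ainf) (hs₀ : 0 < s₀) (hc₀ : 0 < c₀)
    (b b' b'' f f' f'' : ℝ → ℝ)
    (hbpos : ∀ x : ℝ, 0 < x → 0 < b x)
    (hbnonneg : ∀ x : ℝ, 0 ≤ x → 0 ≤ b x)
    (hbC2 : ContDiffOn ℝ 2 b (Set.Ioi 0))
    (hb' : ∀ x : ℝ, 0 < x → HasDerivAt b (b' x) x)
    (hb'' : ∀ x : ℝ, 0 < x → HasDerivAt b' (b'' x) x)
    (hbf : ∀ x : ℝ, 0 < x → b x = ainf * x ^ β + f x)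
    (hf' : ∀ x : ℝ, 0 < x → HasDerivAt f (f' x) x)
    (hf'' : ∀ x : ℝ, 0 < x → HasDerivAt f' (f'' x) x)
    (hfo : Tendsto (fun x : ℝ => f x / x ^ ((3 * β - 1) / 2)) atTop (𝓝 0))
    (hf'o : Tendsto (fun x : ℝ => f' x / x ^ ((3 * β - 3) / 2)) atTop (𝓝 0))
    (hf''o : Tendsto (fun x : ℝ => f'' x / x ^ ((3 * β - 5) / 2)) atTop (𝓝 0))
    (Smat : ℝ → EuclideanSpace ℝ (Fin d) → Matrix (Fin (d + 1)) (Fin (d + 1)) ℝ)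
    (Sinf : Matrix (Fin (d + 1)) (Fin (d + 1)) ℝ)
    (hSbdd : ∃ K : ℝ, ∀ x : ℝ, ∀ y : EuclideanSpace ℝ (Fin d), ‖y‖ ≤ b x →
      ∀ i j : Fin (d + 1), |Smat x y i j| ≤ K)
    (hSpos : ∀ x : ℝ, ∀ y : EuclideanSpace ℝ (Fin d), ‖y‖ ≤ b x → (Smat x y).PosDef)
    (hSinfpos : Sinf.PosDef)
    (hSconv : ∀ ε : ℝ, 0 < ε → ∃ X : ℝ, ∀ x ≥ X,
      ∀ y : EuclideanSpace ℝ (Fin d), ‖y‖ ≤ b x →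
        ∀ i j : Fin (d + 1), |Smat x y i j - Sinf i j| ≤ ε)
    (hStrace : ∀ ε : ℝ, 0 < ε → ∃ X : ℝ, ∀ x ≥ X,
      ∀ y : EuclideanSpace ℝ (Fin d), ‖y‖ ≤ b x →
        x ^ ((1 - β) / 2) *
          |(∑ i : Fin d, Smat x y i.succ i.succ) - ∑ i : Fin d, Sinf i.succ i.succ|
          ≤ ε) :
    UnifLittleO (d := d) b
      (fun x y =>
        (∑ i : Fin (d + 1), ∑ j : Fin (d + 1),
            Smat x y i j * hessg b b' b'' s₀ c₀ x y i j)
          - s₀ * (∑ i : Fin d, Sinf i.succ i.succ) / (c₀ * ainf) * x ^ (-β))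
      (-(1 + β) / 2) := by
  obtain ⟨K, hK⟩ := hSbdd
  exact stmt_5_general hβ1 ha hc₀.ne' hb' hb'' hbf hf' hf''
    (isLittleO_rpow_of_tendsto_div hfo) (isBigO_rpow_of_tendsto_div hf'o (by linarith))
    (isBigO_rpow_of_tendsto_div hf''o (by linarith))
    (fun j => isBigO_one_domainAtTop fun x y hy => hK x y hy 0 j)
    (fun i => isBigO_one_domainAtTop fun x y hy => hK x y hy i 0)
    (isLittleO_rpow_neg_domainAtTop hStrace)
end

section
/- Define μ(x,y) := (1/2)·( b₀(g(x,y))·Δ_Σ g(x,y) + b₀′(g(x,y))·⟨∇g(x,y), Σ(x,y)·∇g(x,y)⟩ ). Then, as x → ∞, uniformly on D, μ(x,y) = s₀·σ̄²/(2c₀) + o(x^{(β−1)/2}). -/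
open Filter Topology

/-- The gradient `∇g(x,y) ∈ ℝ^{1+d}` of `g(x,y) = x + (s₀/(2c₀))|y|²/b(x)`. -/
noncomputable def gradg {d : ℕ} (b b' : ℝ → ℝ) (s₀ c₀ : ℝ)
    (x : ℝ) (y : EuclideanSpace ℝ (Fin d)) : Fin (d + 1) → ℝ :=
  Fin.cons (1 - s₀ / (2 * c₀) * ‖y‖ ^ 2 * b' x / (b x) ^ 2)
    (fun i => s₀ / c₀ * y i / b x)

/-!
Multiplying the Hessian of `g` by `b` leaves `s₀/c₀` on the transverse diagonal and `O(x^{β-1})`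
elsewhere, because `|y| ≤ b`, `b′ = O(x^{β-1})` and `b·b″ = O(x^{2β-2})`. Moreover
`g - x = O(b) = o(x)`, so by the mean value theorem `b(g) = b·(1 + O(x^{β-1}))` and
`b′(g) = O(x^{β-1})`, while `∇g` stays bounded. Hence `μ = s₀/(2c₀)·∑ᵢ Σᵢᵢ + O(x^{β-1})`, and the
error `o(x^{(β-1)/2})` is that of the transverse trace.
-/

open Asymptotics

/-- The end of the domain `D = {(x, y) : ‖y‖ ≤ b x}`: the filter on `ℝ × E` along which limits as
`x → ∞`, uniformly on `D`, are taken. -/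
def tubeAtTop {E : Type*} [NormedAddCommGroup E] (b : ℝ → ℝ) : Filter (ℝ × E) :=
  comap Prod.fst atTop ⊓ 𝓟 {p | ‖p.2‖ ≤ b p.1}

/-- The function `g(x,y) = x + (s₀/(2c₀))|y|²/b(x)`, whose gradient and Hessian are `gradg` and
`hessg`. -/
noncomputable def gfun {d : ℕ} (b : ℝ → ℝ) (s₀ c₀ : ℝ) (x : ℝ) (y : EuclideanSpace ℝ (Fin d)) : ℝ :=
  x + s₀ / (2 * c₀) * ‖y‖ ^ 2 / b x

/-- The drift `μ = ½(b₀(g)·Δ_Σg + b₀′(g)·⟨∇g, Σ∇g⟩)` for the covariance field `S = Σ`. -/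
noncomputable def drift {d : ℕ} (b b' b'' b₀ b₀' : ℝ → ℝ) (s₀ c₀ : ℝ)
    (S : ℝ → EuclideanSpace ℝ (Fin d) → Matrix (Fin (d + 1)) (Fin (d + 1)) ℝ)
    (x : ℝ) (y : EuclideanSpace ℝ (Fin d)) : ℝ :=
  (1 / 2) *
    (b₀ (gfun b s₀ c₀ x y) * (∑ i, ∑ j, S x y i j * hessg b b' b'' s₀ c₀ x y i j)
      + b₀' (gfun b s₀ c₀ x y) *
        (∑ i, ∑ j, gradg b b' s₀ c₀ x y i * S x y i j * gradg b b' s₀ c₀ x y j))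

section Calculus

variable {α : Type*} {l : Filter α}

lemma isLittleO_rpow_atTop_iff_tendsto {f : ℝ → ℝ} {p : ℝ} :
    (f =o[atTop] fun x => x ^ p) ↔ Tendsto (fun x => f x / x ^ p) atTop (𝓝 0) := by
  refine isLittleO_iff_tendsto' ?_
  filter_upwards [eventually_gt_atTop 0] with x hx h
  exact absurd h (Real.rpow_pos_of_pos hx p).ne'

lemma isLittleO_rpow_rpow_atTop_of_lt {p q : ℝ} (hpq : p < q) :
    (fun x : ℝ => x ^ p) =o[atTop] fun x => x ^ q := by
  refine isLittleO_rpow_atTop_iff_tendsto.2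
    ((tendsto_rpow_neg_atTop (sub_pos.2 hpq)).congr' ?_)
  filter_upwards [eventually_gt_atTop 0] with x hx
  rw [neg_sub, Real.rpow_sub hx]

lemma isBigO_rpow_rpow_atTop_of_le {p q : ℝ} (hpq : p ≤ q) :
    (fun x : ℝ => x ^ p) =O[atTop] fun x => x ^ q := by
  rcases hpq.eq_or_lt with rfl | hlt
  · exact isBigO_refl _ _
  · exact (isLittleO_rpow_rpow_atTop_of_lt hlt).isBigO

lemma eventuallyEq_of_hasDerivAt {f g f' g' : ℝ → ℝ} (hfg : f =ᶠ[atTop] g)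
    (hf : ∀ᶠ x in atTop, HasDerivAt f (f' x) x) (hg : ∀ᶠ x in atTop, HasDerivAt g (g' x) x) :
    f' =ᶠ[atTop] g' := by
  obtain ⟨X, hX⟩ := eventually_atTop.1 hfg
  filter_upwards [hf, hg, eventually_gt_atTop X] with x hfx hgx hx
  exact hfx.unique (hgx.congr_of_eventuallyEq ((lt_mem_nhds hx).mono fun z hz => hX z hz.le))

lemma eventuallyEq_deriv_of_eq_mul_rpow_add {F F' f f' : ℝ → ℝ} {c q : ℝ}
    (hF : F =ᶠ[atTop] fun x => c * x ^ q + f x)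
    (hF' : ∀ᶠ x in atTop, HasDerivAt F (F' x) x) (hf' : ∀ᶠ x in atTop, HasDerivAt f (f' x) x) :
    F' =ᶠ[atTop] fun x => c * q * x ^ (q - 1) + f' x := by
  refine eventuallyEq_of_hasDerivAt hF hF' ?_
  filter_upwards [hf', eventually_gt_atTop 0] with x hx hx0
  rw [mul_assoc]
  exact ((Real.hasDerivAt_rpow_const (Or.inl hx0.ne')).const_mul c).add hx

lemma isBigO_rpow_of_eq_mul_rpow_add_s6 {F f : ℝ → ℝ} {c p q s : ℝ} (hqs : q ≤ s) (hps : p ≤ s)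
    (hF : F =ᶠ[atTop] fun x => c * x ^ q + f x) (hf : f =o[atTop] fun x => x ^ p) :
    F =O[atTop] fun x => x ^ s :=
  hF.trans_isBigO <| ((isBigO_rpow_rpow_atTop_of_le hqs).const_mul_left c).add
    (hf.isBigO.trans (isBigO_rpow_rpow_atTop_of_le hps))

lemma isBigO_rpow_derivs_of_eq_mul_rpow_add {F F' F'' f f' f'' : ℝ → ℝ} {c q p p' p'' : ℝ}
    (hp : p ≤ q) (hp' : p' ≤ q - 1) (hp'' : p'' ≤ q - 2)
    (hF : F =ᶠ[atTop] fun x => c * x ^ q + f x)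
    (hF' : ∀ᶠ x in atTop, HasDerivAt F (F' x) x) (hF'' : ∀ᶠ x in atTop, HasDerivAt F' (F'' x) x)
    (hf' : ∀ᶠ x in atTop, HasDerivAt f (f' x) x) (hf'' : ∀ᶠ x in atTop, HasDerivAt f' (f'' x) x)
    (hf : f =o[atTop] fun x => x ^ p) (hf'o : f' =o[atTop] fun x => x ^ p')
    (hf''o : f'' =o[atTop] fun x => x ^ p'') :
    F =O[atTop] (fun x => x ^ q) ∧ F' =O[atTop] (fun x => x ^ (q - 1)) ∧
      F'' =O[atTop] (fun x => x ^ (q - 2)) := by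
  have hF'_eq := eventuallyEq_deriv_of_eq_mul_rpow_add hF hF' hf'
  have hF''_eq := eventuallyEq_deriv_of_eq_mul_rpow_add hF'_eq hF'' hf''
  exact ⟨isBigO_rpow_of_eq_mul_rpow_add_s6 le_rfl hp hF hf,
    isBigO_rpow_of_eq_mul_rpow_add_s6 le_rfl hp' hF'_eq hf'o,
    isBigO_rpow_of_eq_mul_rpow_add_s6 (by linarith) hp'' hF''_eq hf''o⟩

lemma isBigO_comp_rpow_of_isEquivalent {f : ℝ → ℝ} {u v : α → ℝ} {γ : ℝ}
    (hf : f =O[atTop] fun x => x ^ γ) (hu : Tendsto u l atTop) (hvu : v ~[l] u) :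
    (fun a => f (v a)) =O[l] fun a => u a ^ γ := by
  have hv : Tendsto v l atTop := hvu.symm.tendsto_atTop hu
  exact (hf.comp_tendsto hv).trans
    (hvu.isTheta.rpow (hv.eventually_ge_atTop 0) (hu.eventually_ge_atTop 0)).isBigO

lemma isBigO_comp_sub_comp {f f' : ℝ → ℝ} {u v : α → ℝ} {γ : ℝ}
    (hf : ∀ᶠ x in atTop, HasDerivAt f (f' x) x) (hf' : f' =O[atTop] fun x => x ^ γ)
    (hu : Tendsto u l atTop) (hvu : v ~[l] u) :
    (fun a => f (v a) - f (u a)) =O[l] fun a => u a ^ γ * (v a - u a) := by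
  rcases l.eq_or_neBot with rfl | _
  · exact isBigO_bot _ _
  obtain ⟨X, hX⟩ := eventually_atTop.1 hf
  have mean_value : ∀ᶠ a in l, ∃ z ∈ Set.uIcc (u a) (v a),
      f (v a) - f (u a) = f' z * (v a - u a) := by
    filter_upwards [hu.eventually_ge_atTop X,
      (hvu.symm.tendsto_atTop hu).eventually_ge_atTop X] with a hua hva
    obtain ⟨z, hz, h⟩ := domain_mvt (s := Set.Ici X)
      (fun x hx => (hX x hx).hasFDerivAt.hasFDerivWithinAt) (convex_Ici X) hua hva
    exact ⟨z, segment_eq_uIcc (u a) (v a) ▸ hz, by simpa [mul_comm] using h⟩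
  obtain ⟨ξ, hξ⟩ := mean_value.choice
  have hξu : ξ ~[l] u :=
    IsBigO.trans_isLittleO (g := v - u)
      (.of_bound' (hξ.mono fun a ha => Set.abs_sub_left_of_mem_uIcc ha.1)) hvu
  exact ((isBigO_comp_rpow_of_isEquivalent hf' hu hξu).mul (isBigO_refl _ l)).congr'
    (hξ.mono fun a ha => ha.2.symm) .rfl

end Calculus

section Tube

variable {E : Type*} [NormedAddCommGroup E] {b : ℝ → ℝ}

lemma eventually_tubeAtTop {P : ℝ × E → Prop} :
    (∀ᶠ p in tubeAtTop b, P p) ↔ ∃ X, ∀ x ≥ X, ∀ y, ‖y‖ ≤ b x → P (x, y) := by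
  simp only [tubeAtTop, eventually_inf_principal, eventually_comap, eventually_atTop]
  refine exists_congr fun X => ⟨fun h x hx y => h x hx (x, y) rfl, ?_⟩
  rintro h _ hx ⟨x, y⟩ rfl
  exact h x hx y

lemma tendsto_fst_tubeAtTop : Tendsto Prod.fst (tubeAtTop b : Filter (ℝ × E)) atTop :=
  tendsto_comap.mono_left inf_le_left

lemma isBigO_one_tubeAtTop_of_abs_le {h : ℝ × E → ℝ} {K : ℝ}
    (hK : ∀ x y, ‖y‖ ≤ b x → |h (x, y)| ≤ K) : h =O[tubeAtTop b] fun _ => (1 : ℝ) :=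
  .of_bound K <| eventually_tubeAtTop.2 ⟨0, fun x _ y hy => by simpa using hK x y hy⟩

lemma isBigO_div_one_tubeAtTop {h : ℝ × E → ℝ} (hh : ∀ p, |h p| ≤ ‖p.2‖) :
    (fun p => h p / b p.1) =O[tubeAtTop b] fun _ => (1 : ℝ) := by
  refine isBigO_one_tubeAtTop_of_abs_le (K := 1) fun x y hy => ?_
  rw [abs_div]
  exact div_le_one_of_le₀ (((hh (x, y)).trans hy).trans (le_abs_self _)) (abs_nonneg _)

lemma unifLittleO_iff_isLittleO {d : ℕ} {F : ℝ → EuclideanSpace ℝ (Fin d) → ℝ} {a : ℝ} :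
    UnifLittleO b F a ↔ (fun p => F p.1 p.2) =o[tubeAtTop b] fun p => p.1 ^ a := by
  rw [isLittleO_iff]
  refine forall₂_congr fun ε _ => ?_
  rw [← eventually_tubeAtTop (P := fun p => |F p.1 p.2| ≤ ε * p.1 ^ a)]
  refine eventually_congr ?_
  filter_upwards [tendsto_fst_tubeAtTop.eventually_ge_atTop 0] with p hp
  rw [Real.norm_eq_abs, Real.norm_of_nonneg (Real.rpow_nonneg hp a)]

lemma unifLittleO_of_rpow_mul_abs_le {d : ℕ} {F : ℝ → EuclideanSpace ℝ (Fin d) → ℝ} {a q : ℝ}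
    (hqa : q = -a)
    (hF : ∀ ε : ℝ, 0 < ε → ∃ X : ℝ, ∀ x ≥ X, ∀ y, ‖y‖ ≤ b x → x ^ q * |F x y| ≤ ε) :
    UnifLittleO b F a := by
  intro ε hε
  obtain ⟨X, hX⟩ := hF ε hε
  refine ⟨max X 1, fun x hx y hy => ?_⟩
  have hx0 : 0 < x := zero_lt_one.trans_le ((le_max_right _ _).trans hx)
  have h := hX x ((le_max_left _ _).trans hx) y hy
  rwa [hqa, Real.rpow_neg hx0.le, inv_mul_le_iff₀ (Real.rpow_pos_of_pos hx0 a), mul_comm] at h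

end Tube

section Geometry

variable {d : ℕ} {b b' b'' r : ℝ → ℝ} {s₀ c₀ : ℝ}
  {S : ℝ → EuclideanSpace ℝ (Fin d) → Matrix (Fin (d + 1)) (Fin (d + 1)) ℝ}

lemma isBigO_norm_div_tubeAtTop :
    (fun p : ℝ × EuclideanSpace ℝ (Fin d) => ‖p.2‖ / b p.1) =O[tubeAtTop b] fun _ => (1 : ℝ) :=
  isBigO_div_one_tubeAtTop fun p => (abs_norm p.2).le

lemma isBigO_coord_div_tubeAtTop (i : Fin d) :
    (fun p : ℝ × EuclideanSpace ℝ (Fin d) => p.2 i / b p.1) =O[tubeAtTop b] fun _ => (1 : ℝ) :=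
  isBigO_div_one_tubeAtTop fun p => PiLp.norm_apply_le p.2 i

lemma isBigO_gradg (hb' : b' =O[atTop] fun _ => (1 : ℝ)) (i : Fin (d + 1)) :
    (fun p : ℝ × EuclideanSpace ℝ (Fin d) => gradg b b' s₀ c₀ p.1 p.2 i) =O[tubeAtTop b]
      fun _ => (1 : ℝ) := by
  cases i using Fin.cases with
  | zero =>
    have h := ((isBigO_norm_div_tubeAtTop (d := d) (b := b)).pow 2).mul
      (hb'.comp_tendsto tendsto_fst_tubeAtTop)
    refine ((isBigO_refl _ _).sub (h.const_mul_left (s₀ / (2 * c₀)))).congr (fun p => ?_)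
      (fun _ => by simp)
    simp only [gradg, Fin.cons_zero, Function.comp_apply]
    ring
  | succ i =>
    refine ((isBigO_coord_div_tubeAtTop i).const_mul_left (s₀ / c₀)).congr_left fun p => ?_
    simp only [gradg, Fin.cons_succ, mul_div_assoc]

lemma isBigO_mul_hessg_sub_diagonal (hb : ∀ᶠ x in atTop, b x ≠ 0)
    (hb' : b' =O[atTop] r) (hb'' : (fun x => b x * b'' x) =O[atTop] r)
    (hr : r =O[atTop] fun _ => (1 : ℝ)) (i j : Fin (d + 1)) :
    (fun p : ℝ × EuclideanSpace ℝ (Fin d) => b p.1 * hessg b b' b'' s₀ c₀ p.1 p.2 i j -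
      Matrix.diagonal (Fin.cons 0 fun _ => s₀ / c₀) i j) =O[tubeAtTop b] fun p => r p.1 := by
  have hne : ∀ᶠ p : ℝ × EuclideanSpace ℝ (Fin d) in tubeAtTop b, b p.1 ≠ 0 :=
    tendsto_fst_tubeAtTop.eventually hb
  have mixed (k : Fin d) : (fun p : ℝ × EuclideanSpace ℝ (Fin d) =>
      b p.1 * (-(s₀ / c₀) * p.2 k * b' p.1 / b p.1 ^ 2)) =O[tubeAtTop b] fun p => r p.1 := by
    refine (((isBigO_coord_div_tubeAtTop k).mul (hb'.comp_tendsto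
      tendsto_fst_tubeAtTop)).const_mul_left (-(s₀ / c₀))).congr' ?_ (.of_forall fun _ => one_mul _)
    filter_upwards [hne] with p hp
    simp only [Function.comp_apply]
    field_simp
  cases i using Fin.cases with
  | zero =>
    cases j using Fin.cases with
    | zero =>
      have hquad : (fun x => 2 * b' x ^ 2 - b x * b'' x) =O[atTop] r := by
        refine IsBigO.sub (IsBigO.const_mul_left ?_ 2) hb''
        simpa only [sq, mul_one] using hb'.mul (hb'.trans hr)
      refine ((((isBigO_norm_div_tubeAtTop (d := d)).pow 2).mul (hquad.comp_tendsto
        tendsto_fst_tubeAtTop)).const_mul_left (s₀ / (2 * c₀))).congr' ?_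
        (.of_forall fun _ => by simp)
      filter_upwards [hne] with p hp
      simp only [hessg, Matrix.diagonal_apply_eq, Fin.cons_zero, sub_zero, Function.comp_apply]
      field_simp
    | succ j => simpa [hessg, Matrix.diagonal_apply_ne _ (Fin.succ_ne_zero j).symm] using mixed j
  | succ i =>
    cases j using Fin.cases with
    | zero => simpa [hessg, Matrix.diagonal_apply_ne _ (Fin.succ_ne_zero i)] using mixed i
    | succ j =>
      refine (isBigO_zero _ _).congr' ?_ .rfl
      filter_upwards [hne] with p hp
      rcases eq_or_ne i j with rfl | hij
      · simp [hessg, mul_div_cancel₀ _ hp]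
      · simp [hessg, hij]

lemma isBigO_mul_contract_hessg_sub_trace (hb : ∀ᶠ x in atTop, b x ≠ 0)
    (hb' : b' =O[atTop] r) (hb'' : (fun x => b x * b'' x) =O[atTop] r)
    (hr : r =O[atTop] fun _ => (1 : ℝ))
    (hS : ∀ i j, (fun p => S p.1 p.2 i j) =O[tubeAtTop b] fun _ => (1 : ℝ)) :
    (fun p => b p.1 * (∑ i, ∑ j, S p.1 p.2 i j * hessg b b' b'' s₀ c₀ p.1 p.2 i j) -
      s₀ / c₀ * ∑ i : Fin d, S p.1 p.2 i.succ i.succ) =O[tubeAtTop b] fun p => r p.1 := by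
  have hsum := IsBigO.fun_sum (s := Finset.univ) fun i _ => IsBigO.fun_sum (s := Finset.univ)
    fun j _ => (hS i j).mul
      (isBigO_mul_hessg_sub_diagonal (s₀ := s₀) (c₀ := c₀) hb hb' hb'' hr i j)
  refine hsum.congr (fun p => ?_) fun _ => one_mul _
  have hdiag : ∑ i, ∑ j, S p.1 p.2 i j *
      Matrix.diagonal (Fin.cons 0 fun _ => s₀ / c₀ : Fin (d + 1) → ℝ) i j =
      s₀ / c₀ * ∑ i : Fin d, S p.1 p.2 i.succ i.succ := by
    simp [Matrix.diagonal_apply, Fin.sum_univ_succ, Finset.mul_sum, mul_comm]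
  simp only [mul_sub, Finset.sum_sub_distrib, hdiag, mul_left_comm, ← Finset.mul_sum]

lemma isBigO_quadratic_gradg (hb' : b' =O[atTop] fun _ => (1 : ℝ))
    (hS : ∀ i j, (fun p => S p.1 p.2 i j) =O[tubeAtTop b] fun _ => (1 : ℝ)) :
    (fun p => ∑ i, ∑ j, gradg b b' s₀ c₀ p.1 p.2 i * S p.1 p.2 i j * gradg b b' s₀ c₀ p.1 p.2 j)
      =O[tubeAtTop b] fun _ => (1 : ℝ) := by
  refine IsBigO.fun_sum fun i _ => IsBigO.fun_sum fun j _ => ?_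
  simpa only [mul_one] using ((isBigO_gradg hb' i).mul (hS i j)).mul (isBigO_gradg hb' j)

lemma isBigO_gfun_sub_fst : (fun p : ℝ × EuclideanSpace ℝ (Fin d) =>
    gfun b s₀ c₀ p.1 p.2 - p.1) =O[tubeAtTop b] fun p => b p.1 := by
  refine ((((isBigO_norm_div_tubeAtTop (d := d)).pow 2).mul (isBigO_refl (fun p => b p.1)
    _)).const_mul_left (s₀ / (2 * c₀))).congr (fun p => ?_) fun _ => by simp
  rcases eq_or_ne (b p.1) 0 with h0 | h0
  · simp [gfun, h0]
  · simp only [gfun]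
    field_simp
    ring

lemma isEquivalent_gfun_fst (hb : b =o[atTop] fun x => x) :
    (fun p : ℝ × EuclideanSpace ℝ (Fin d) => gfun b s₀ c₀ p.1 p.2) ~[tubeAtTop b] Prod.fst :=
  isBigO_gfun_sub_fst.trans_isLittleO (hb.comp_tendsto tendsto_fst_tubeAtTop)

lemma isBigO_comp_gfun_sub_div {γ : ℝ} (hb : ∀ᶠ x in atTop, b x ≠ 0) (hbo : b =o[atTop] fun x => x)
    (hderiv : ∀ᶠ x in atTop, HasDerivAt b (b' x) x) (hb' : b' =O[atTop] fun x => x ^ γ) :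
    (fun p : ℝ × EuclideanSpace ℝ (Fin d) => (b (gfun b s₀ c₀ p.1 p.2) - b p.1) / b p.1)
      =O[tubeAtTop b] fun p => p.1 ^ γ := by
  have hinc := (isBigO_comp_sub_comp hderiv hb' tendsto_fst_tubeAtTop
    (isEquivalent_gfun_fst (d := d) (s₀ := s₀) (c₀ := c₀) hbo)).trans
      ((isBigO_refl _ _).mul isBigO_gfun_sub_fst)
  refine (hinc.mul (isBigO_refl (fun p => (b p.1)⁻¹) _)).congr' .rfl ?_
  filter_upwards [tendsto_fst_tubeAtTop.eventually hb] with p hp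
  rw [mul_assoc, mul_inv_cancel₀ hp, mul_one]

lemma isBigO_drift_sub_trace {b₀ b₀' : ℝ → ℝ} {γ : ℝ} (hγ : γ ≤ 0)
    (hb : ∀ᶠ x in atTop, b x ≠ 0) (hderiv : ∀ᶠ x in atTop, HasDerivAt b (b' x) x)
    (hbo : b =o[atTop] fun x => x) (hb' : b' =O[atTop] fun x => x ^ γ)
    (hb'' : (fun x => b x * b'' x) =O[atTop] fun x => x ^ γ)
    (hb₀ : b₀ =ᶠ[atTop] b) (hb₀' : b₀' =ᶠ[atTop] b')
    (hS : ∀ i j, (fun p => S p.1 p.2 i j) =O[tubeAtTop b] fun _ => (1 : ℝ)) :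
    (fun p => drift b b' b'' b₀ b₀' s₀ c₀ S p.1 p.2 -
      s₀ / (2 * c₀) * ∑ i : Fin d, S p.1 p.2 i.succ i.succ) =O[tubeAtTop b] fun p => p.1 ^ γ := by
  have hγ_one : (fun x : ℝ => x ^ γ) =O[atTop] fun _ => (1 : ℝ) := by
    simpa only [Real.rpow_zero] using isBigO_rpow_rpow_atTop_of_le hγ
  have hg_equiv := isEquivalent_gfun_fst (d := d) (s₀ := s₀) (c₀ := c₀) hbo
  have hg_atTop := hg_equiv.symm.tendsto_atTop tendsto_fst_tubeAtTop
  have hincr := isBigO_comp_gfun_sub_div (d := d) (s₀ := s₀) (c₀ := c₀) hb hbo hderiv hb'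
  have hlap := isBigO_mul_contract_hessg_sub_trace (s₀ := s₀) (c₀ := c₀) hb hb' hb'' hγ_one hS
  have htrace : (fun p => s₀ / c₀ * ∑ i : Fin d, S p.1 p.2 i.succ i.succ)
      =O[tubeAtTop b] fun _ => (1 : ℝ) :=
    (IsBigO.fun_sum fun i _ => hS i.succ i.succ).const_mul_left _
  have hlap_one := (hlap.trans (hγ_one.comp_tendsto tendsto_fst_tubeAtTop)).add htrace
  have hquad := (isBigO_comp_rpow_of_isEquivalent hb' tendsto_fst_tubeAtTop hg_equiv).mul
    (isBigO_quadratic_gradg (s₀ := s₀) (c₀ := c₀) (hb'.trans hγ_one) hS)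
  simp only [mul_one] at hquad
  have herr := (((hincr.mul hlap_one).congr_right fun _ => mul_one _).add hlap).add hquad
  refine (herr.const_mul_left (1 / 2)).congr' ?_ .rfl
  filter_upwards [tendsto_fst_tubeAtTop.eventually hb, hg_atTop.eventually hb₀,
    hg_atTop.eventually hb₀'] with p hp hp₀ hp₀'
  simp only [drift, hp₀, hp₀']
  field_simp
  ring

end Geometry

theorem stmt_6_general {d : ℕ} {β s₀ c₀ T : ℝ} (hβ : β < 1) (_hc₀ : c₀ ≠ 0)
    {b b' b'' b₀ b₀' : ℝ → ℝ}
    (hbpos : ∀ᶠ x in atTop, 0 < b x)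
    (hb' : ∀ᶠ x in atTop, HasDerivAt b (b' x) x) (_hb'' : ∀ᶠ x in atTop, HasDerivAt b' (b'' x) x)
    (hbO : b =O[atTop] fun x => x ^ β) (hb'O : b' =O[atTop] fun x => x ^ (β - 1))
    (hb''O : b'' =O[atTop] fun x => x ^ (β - 2))
    (hb₀ : b₀ =ᶠ[atTop] b) (hb₀' : ∀ᶠ x in atTop, HasDerivAt b₀ (b₀' x) x)
    {S : ℝ → EuclideanSpace ℝ (Fin d) → Matrix (Fin (d + 1)) (Fin (d + 1)) ℝ}
    (hS : ∀ i j, (fun p => S p.1 p.2 i j) =O[tubeAtTop b] fun _ => (1 : ℝ))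
    (hStrace : UnifLittleO b (fun x y => (∑ i : Fin d, S x y i.succ i.succ) - T) ((β - 1) / 2)) :
    UnifLittleO b (fun x y => drift b b' b'' b₀ b₀' s₀ c₀ S x y - s₀ * T / (2 * c₀))
      ((β - 1) / 2) := by
  have hbo : b =o[atTop] fun x => x := by
    simpa only [Real.rpow_one] using hbO.trans_isLittleO (isLittleO_rpow_rpow_atTop_of_lt hβ)
  have hbb'' : (fun x => b x * b'' x) =O[atTop] fun x => x ^ (β - 1) :=
    hbO.mul_atTop_rpow_of_isBigO_rpow β (β - 2) (β - 1) hb''O (by linarith)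
  have hdrift := isBigO_drift_sub_trace (s₀ := s₀) (c₀ := c₀) (sub_nonpos.2 hβ.le)
    (hbpos.mono fun _ => ne_of_gt) hb' hbo hb'O hbb'' hb₀
    (eventuallyEq_of_hasDerivAt hb₀ hb₀' hb') hS
  have hrate := (isLittleO_rpow_rpow_atTop_of_lt
    (show β - 1 < (β - 1) / 2 by linarith)).comp_tendsto (tendsto_fst_tubeAtTop (b := b)
    (E := EuclideanSpace ℝ (Fin d)))
  refine unifLittleO_iff_isLittleO.2 (((hdrift.trans_isLittleO hrate).add
    ((unifLittleO_iff_isLittleO.1 hStrace).const_mul_left (s₀ / (2 * c₀)))).congr_left fun p => ?_)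
  ring

/-- With `μ(x,y) := ½(b₀(g)·Δ_Σg + b₀′(g)·⟨∇g, Σ∇g⟩)`, under (D₂⁺) and
(C⁺), and `b₀` smooth, vanishing on `[0,1/2]` and equal to `b` on `[1,∞)`, one has,
uniformly on `D` as `x → ∞`, `μ(x,y) = s₀σ̄²/(2c₀) + o(x^{(β-1)/2})`. -/
theorem stmt_6 (d : ℕ) (hd : 1 ≤ d) (β ainf s₀ c₀ : ℝ)
    (hβ : -1 < β) (hβ1 : β < 1) (ha : 0 < ainf) (hs₀ : 0 < s₀) (hc₀ : 0 < c₀)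
    (b b' b'' f f' f'' : ℝ → ℝ)
    (hbpos : ∀ x : ℝ, 0 < x → 0 < b x)
    (hbnonneg : ∀ x : ℝ, 0 ≤ x → 0 ≤ b x)
    (hbC2 : ContDiffOn ℝ 2 b (Set.Ioi 0))
    (hb' : ∀ x : ℝ, 0 < x → HasDerivAt b (b' x) x)
    (hb'' : ∀ x : ℝ, 0 < x → HasDerivAt b' (b'' x) x)
    (hbf : ∀ x : ℝ, 0 < x → b x = ainf * x ^ β + f x)
    (hf' : ∀ x : ℝ, 0 < x → HasDerivAt f (f' x) x)
    (hf'' : ∀ x : ℝ, 0 < x → HasDerivAt f' (f'' x) x)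
    (hfo : Tendsto (fun x : ℝ => f x / x ^ ((3 * β - 1) / 2)) atTop (𝓝 0))
    (hf'o : Tendsto (fun x : ℝ => f' x / x ^ ((3 * β - 3) / 2)) atTop (𝓝 0))
    (hf''o : Tendsto (fun x : ℝ => f'' x / x ^ ((3 * β - 5) / 2)) atTop (𝓝 0))
    (Smat : ℝ → EuclideanSpace ℝ (Fin d) → Matrix (Fin (d + 1)) (Fin (d + 1)) ℝ)
    (Sinf : Matrix (Fin (d + 1)) (Fin (d + 1)) ℝ)
    (hSbdd : ∃ K : ℝ, ∀ x : ℝ, ∀ y : EuclideanSpace ℝ (Fin d), ‖y‖ ≤ b x →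
      ∀ i j : Fin (d + 1), |Smat x y i j| ≤ K)
    (hSpos : ∀ x : ℝ, ∀ y : EuclideanSpace ℝ (Fin d), ‖y‖ ≤ b x → (Smat x y).PosDef)
    (hSinfpos : Sinf.PosDef)
    (hSconv : ∀ ε : ℝ, 0 < ε → ∃ X : ℝ, ∀ x ≥ X,
      ∀ y : EuclideanSpace ℝ (Fin d), ‖y‖ ≤ b x →
        ∀ i j : Fin (d + 1), |Smat x y i j - Sinf i j| ≤ ε)
    (hStrace : ∀ ε : ℝ, 0 < ε → ∃ X : ℝ, ∀ x ≥ X,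
      ∀ y : EuclideanSpace ℝ (Fin d), ‖y‖ ≤ b x →
        x ^ ((1 - β) / 2) *
          |(∑ i : Fin d, Smat x y i.succ i.succ) - ∑ i : Fin d, Sinf i.succ i.succ|
          ≤ ε)
    -- the truncated boundary function `b₀` and its derivative `b₀′`
    (b₀ b₀' : ℝ → ℝ)
    (hb₀smooth : ContDiffOn ℝ (⊤ : ℕ∞) b₀ (Set.Ici 0))
    (hb₀' : ∀ x : ℝ, 0 < x → HasDerivAt b₀ (b₀' x) x)
    (hb₀zero : ∀ x ∈ Set.Icc (0:ℝ) (1/2), b₀ x = 0)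
    (hb₀b : ∀ x : ℝ, 1 ≤ x → b₀ x = b x)
    (hb₀nonneg : ∀ x : ℝ, 0 ≤ x → 0 ≤ b₀ x) :
    UnifLittleO (d := d) b
      (fun x y =>
        (1 / 2) *
            (b₀ (x + s₀ / (2 * c₀) * ‖y‖ ^ 2 / b x) *
                (∑ i : Fin (d + 1), ∑ j : Fin (d + 1),
                  Smat x y i j * hessg b b' b'' s₀ c₀ x y i j)
              + b₀' (x + s₀ / (2 * c₀) * ‖y‖ ^ 2 / b x) *
                (∑ i : Fin (d + 1), ∑ j : Fin (d + 1),
                  gradg b b' s₀ c₀ x y i * Smat x y i j * gradg b b' s₀ c₀ x y j))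
          - s₀ * (∑ i : Fin d, Sinf i.succ i.succ) / (2 * c₀))
      ((β - 1) / 2) := by
  have eventually_of_pos {P : ℝ → Prop} (h : ∀ x, 0 < x → P x) : ∀ᶠ x in atTop, P x :=
    (eventually_gt_atTop 0).mono h
  obtain ⟨K, hK⟩ := hSbdd
  obtain ⟨hbO, hb'O, hb''O⟩ := isBigO_rpow_derivs_of_eq_mul_rpow_add
    (by linarith) (by linarith) (by linarith) (eventually_of_pos hbf) (eventually_of_pos hb')
    (eventually_of_pos hb'') (eventually_of_pos hf') (eventually_of_pos hf'')
    (isLittleO_rpow_atTop_iff_tendsto.2 hfo) (isLittleO_rpow_atTop_iff_tendsto.2 hf'o)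
    (isLittleO_rpow_atTop_iff_tendsto.2 hf''o)
  exact stmt_6_general hβ1 hc₀.ne' (eventually_of_pos hbpos) (eventually_of_pos hb')
    (eventually_of_pos hb'') hbO hb'O hb''O ((eventually_ge_atTop 1).mono hb₀b)
    (eventually_of_pos hb₀')
    (fun i j => isBigO_one_tubeAtTop_of_abs_le fun x y hy => hK x y hy i j)
    (unifLittleO_of_rpow_mul_abs_le (by ring) hStrace)
end
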